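/- Let λ, μ > 0, set σ_- = (√λ - √μ)² and σ_+ = (√λ + √μ)². Then for every real z < 0, ∫_{σ_-}^{σ_+} (x - z)^{-1} · (λ+μ-x) / (2μπ √((x - σ_-)(σ_+ - x))) dx = (1/(2μ)) · ( -1 + (λ+μ-z)/√((λ+μ-z)² - 4λμ) ), where all square roots are the nonnegative real square root. -/

import Mathlib

open Real MeasureTheory intervalIntegral

lemma aux_one (c r : ℝ) (hr : 0 < r) :
    IntervalIntegrable (fun x => 1 / √(r ^ 2 - (x - c) ^ 2)) volume (c - r) (c + r) ∧
    ∫ x in (c - r)..(c + r), 1 / √(r ^ 2 - (x - c) ^ 2) = π := by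
  have hle : c - r ≤ c + r := by linarith
  have hc : Continuous (fun x => arcsin ((x - c) / r)) := by
    apply Real.continuous_arcsin.comp
    fun_prop
  have hd : ∀ x ∈ Set.Ioo (c - r) (c + r),
      HasDerivAt (fun x => arcsin ((x - c) / r)) (1 / √(r ^ 2 - (x - c) ^ 2)) x := by
    intro x hx
    have h1 : -1 < (x - c) / r := by rw [lt_div_iff₀ hr]; linarith [hx.1]
    have h2 : (x - c) / r < 1 := by rw [div_lt_one hr]; linarith [hx.2]
    have h := (Real.hasDerivAt_arcsin h1.ne' h2.ne).comp x
      (((hasDerivAt_id x).sub_const c).div_const r)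
    refine h.congr_deriv ?_
    have e : 1 - ((x - c) / r) ^ 2 = (r ^ 2 - (x - c) ^ 2) / r ^ 2 := by field_simp
    have hp : 0 < r ^ 2 - (x - c) ^ 2 := by nlinarith [hx.1, hx.2]
    have hs := Real.sqrt_pos.2 hp
    rw [e, Real.sqrt_div hp.le, Real.sqrt_sq hr.le]
    field_simp
  have hi : IntervalIntegrable (fun x => 1 / √(r ^ 2 - (x - c) ^ 2)) volume (c - r) (c + r) := by
    apply intervalIntegrable_deriv_of_nonneg hc.continuousOn
    · rw [min_eq_left hle, max_eq_right hle]; exact hd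
    · intro x _; positivity
  refine ⟨hi, ?_⟩
  rw [integral_eq_sub_of_hasDerivAt_of_le hle hc.continuousOn hd hi]
  have e1 : (c + r - c) / r = 1 := by field_simp; ring
  have e2 : (c - r - c) / r = -1 := by field_simp; ring
  rw [e1, e2, arcsin_one, arcsin_neg_one]; ring

lemma aux_two (c r w : ℝ) (hr : 0 < r) (hw : r < w) :
    IntervalIntegrable (fun x => √(w ^ 2 - r ^ 2) / ((w + (x - c)) * √(r ^ 2 - (x - c) ^ 2)))
      volume (c - r) (c + r) ∧
    ∫ x in (c - r)..(c + r), √(w ^ 2 - r ^ 2) / ((w + (x - c)) * √(r ^ 2 - (x - c) ^ 2)) = π := by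
  have hle : c - r ≤ c + r := by linarith
  have hD : 0 < w ^ 2 - r ^ 2 := by nlinarith
  have hc : ContinuousOn (fun x => arcsin ((w * (x - c) + r ^ 2) / (r * (w + (x - c)))))
      (Set.Icc (c - r) (c + r)) := by
    apply Real.continuous_arcsin.comp_continuousOn
    apply ContinuousOn.div (by fun_prop) (by fun_prop)
    intro x hx
    have : 0 < w + (x - c) := by linarith [hx.1]
    positivity
  have hd : ∀ x ∈ Set.Ioo (c - r) (c + r),
      HasDerivAt (fun x => arcsin ((w * (x - c) + r ^ 2) / (r * (w + (x - c)))))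
        (√(w ^ 2 - r ^ 2) / ((w + (x - c)) * √(r ^ 2 - (x - c) ^ 2))) x := by
    intro x hx
    have hq : 0 < w + (x - c) := by linarith [hx.1]
    have hy1 : 0 < (x - c) + r := by linarith [hx.1]
    have hy2 : 0 < r - (x - c) := by linarith [hx.2]
    have hrq : 0 < r * (w + (x - c)) := by positivity
    have h1 : -1 < (w * (x - c) + r ^ 2) / (r * (w + (x - c))) := by
      rw [lt_div_iff₀ hrq]; nlinarith [mul_pos hy1 (show 0 < w + r by linarith)]
    have h2 : (w * (x - c) + r ^ 2) / (r * (w + (x - c))) < 1 := by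
      rw [div_lt_one hrq]; nlinarith [mul_pos hy2 (show 0 < w - r by linarith)]
    have hx' := (hasDerivAt_id x).sub_const c
    have h := (Real.hasDerivAt_arcsin h1.ne' h2.ne).comp x
      (((hx'.const_mul w).add_const (r ^ 2)).div ((hx'.const_add w).const_mul r) hrq.ne')
    refine h.congr_deriv ?_
    have hp : 0 < r ^ 2 - (x - c) ^ 2 := by nlinarith
    have e : 1 - ((w * (x - c) + r ^ 2) / (r * (w + (x - c)))) ^ 2
        = (w ^ 2 - r ^ 2) * (r ^ 2 - (x - c) ^ 2) / (r * (w + (x - c))) ^ 2 := by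
      field_simp; ring
    have hs := Real.sqrt_pos.2 hp
    have hs2 := Real.sqrt_pos.2 hD
    have hs3 := Real.sq_sqrt hD.le
    simp only [id]
    rw [e, Real.sqrt_div (by positivity), Real.sqrt_sq hrq.le, Real.sqrt_mul hD.le]
    field_simp
    rw [hs3]; ring
  have hi : IntervalIntegrable
      (fun x => √(w ^ 2 - r ^ 2) / ((w + (x - c)) * √(r ^ 2 - (x - c) ^ 2)))
      volume (c - r) (c + r) := by
    apply intervalIntegrable_deriv_of_nonneg (by rwa [Set.uIcc_of_le hle])
    · rw [min_eq_left hle, max_eq_right hle]; exact hd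
    · rw [min_eq_left hle, max_eq_right hle]
      intro x hx
      have hq : 0 < w + (x - c) := by linarith [hx.1]
      positivity
  refine ⟨hi, ?_⟩
  rw [integral_eq_sub_of_hasDerivAt_of_le hle hc hd hi]
  have p1 : 0 < w + r := by linarith
  have p2 : 0 < w - r := by linarith
  have e1 : (w * (c + r - c) + r ^ 2) / (r * (w + (c + r - c))) = 1 := by
    rw [show c + r - c = r by ring]; field_simp
  have e2 : (w * (c - r - c) + r ^ 2) / (r * (w + (c - r - c))) = -1 := by
    rw [show c - r - c = -r by ring, show w + -r = w - r by ring]; field_simp; ring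
  rw [e1, e2, arcsin_one, arcsin_neg_one]; ring

/-- Stieltjes transform of the off-diagonal entry of the spectral matrix of the bilateral
birth-death process with constant rates: for `z < 0`,
`∫ (x-z)⁻¹ (λ+μ-x)/(2μπ√((x-σ₋)(σ₊-x))) dx = (1/(2μ))(-1 + (λ+μ-z)/√((λ+μ-z)²-4λμ))`. -/
theorem bilateral_constant_stieltjes_12 (lam mu : ℝ) (hlam : 0 < lam) (hmu : 0 < mu)
    (z : ℝ) (hz : z < 0) :
    ∫ x in ((Real.sqrt lam - Real.sqrt mu) ^ 2)..((Real.sqrt lam + Real.sqrt mu) ^ 2),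
        (x - z)⁻¹ * ((lam + mu - x) /
          (2 * mu * Real.pi * Real.sqrt ((x - (Real.sqrt lam - Real.sqrt mu) ^ 2) *
            ((Real.sqrt lam + Real.sqrt mu) ^ 2 - x))))
      = (1 / (2 * mu)) *
          (-1 + (lam + mu - z) / Real.sqrt ((lam + mu - z) ^ 2 - 4 * lam * mu)) := by
  have ha := Real.sq_sqrt hlam.le
  have hb := Real.sq_sqrt hmu.le
  have hap := Real.sqrt_pos.2 hlam
  have hbp := Real.sqrt_pos.2 hmu
  obtain ⟨r, hrdef⟩ : ∃ r, r = 2 * (√lam * √mu) := ⟨_, rfl⟩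
  have hr : 0 < r := by rw [hrdef]; positivity
  have hr2 : 4 * lam * mu = r ^ 2 := by rw [hrdef, mul_pow, mul_pow, ha, hb]; ring
  have em : (√lam - √mu) ^ 2 = (lam + mu) - r := by rw [hrdef]; linear_combination ha + hb
  have ep : (√lam + √mu) ^ 2 = (lam + mu) + r := by rw [hrdef]; linear_combination ha + hb
  have hcr : 0 ≤ lam + mu - r := by rw [← em]; positivity
  rw [em, ep, hr2]
  generalize lam + mu = c at *
  obtain ⟨w, rfl⟩ : ∃ w, z = c - w := ⟨c - z, by ring⟩
  have hw : r < w := by linarith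
  have hD : 0 < w ^ 2 - r ^ 2 := by nlinarith
  have hs := Real.sqrt_pos.2 hD
  obtain ⟨i1, v1⟩ := aux_one c r hr
  obtain ⟨i2, v2⟩ := aux_two c r w hr hw
  rw [show c - (c - w) = w by ring]
  have key : ∫ x in (c - r)..(c + r), (x - (c - w))⁻¹ * ((c - x) /
          (2 * mu * π * √((x - (c - r)) * (c + r - x))))
      = ∫ x in (c - r)..(c + r), ((-(1 / (2 * mu * π))) * (1 / √(r ^ 2 - (x - c) ^ 2)) +
        (w / (2 * mu * π * √(w ^ 2 - r ^ 2))) *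
          (√(w ^ 2 - r ^ 2) / ((w + (x - c)) * √(r ^ 2 - (x - c) ^ 2)))) := by
    apply intervalIntegral.integral_congr
    intro x hx
    rw [Set.uIcc_of_le (by linarith)] at hx
    have hq : 0 < w + (x - c) := by linarith [hx.1]
    simp only
    rw [show (x - (c - r)) * (c + r - x) = r ^ 2 - (x - c) ^ 2 by ring,
      show x - (c - w) = w + (x - c) by ring]
    have hpi := Real.pi_pos
    by_cases h0 : √(r ^ 2 - (x - c) ^ 2) = 0
    · simp [h0]
    · field_simp
      ring
  rw [key, intervalIntegral.integral_add (i1.const_mul _) (i2.const_mul _),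
    intervalIntegral.integral_const_mul, intervalIntegral.integral_const_mul, v1, v2]
  have hpi := Real.pi_pos
  field_simp
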